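/- arXiv:1404.1624 — 2 statements merged into one kernel-verified Lean document; each statement's English description precedes it below -/
import Mathlib

section
/- Let X be a real Banach space and let T : X → X be a continuous mapping that is compact, i.e. it maps bounded subsets of X to sets with compact closure. Suppose there exists R > 0 such that every x ∈ X satisfying x = λ • T x for some λ ∈ [0,1] obeys ‖x‖ ≤ R. Then T possesses a fixed point, i.e. there exists x ∈ X with T x = x. -/
namespace LS
open Finset Classical

lemma collide {α β : Type*} (s : Finset α) (f : α → β) (h : #(s.image f) + 1 = #s) :
    ∃ a b, a ≠ b ∧ a ∈ s ∧ b ∈ s ∧ f a = f b ∧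
      ∀ x ∈ s, ∀ y ∈ s, f x = f y → x = y ∨ (x = a ∧ y = b) ∨ (x = b ∧ y = a) := by
  obtain ⟨a, ha, b, hb, hab, hf⟩ :=
    exists_ne_map_eq_of_card_lt_of_maps_to (s := s) (t := s.image f) (f := f) (by omega)
      (fun x hx => mem_image_of_mem f hx)
  have key : ∀ a ∈ s, ∀ b ∈ s, a ≠ b → f a = f b → Set.InjOn f (s.erase a : Finset α) := by
    intro a ha b hb hab hf
    apply card_image_iff.1
    have : (s.erase a).image f = s.image f := by
      apply Subset.antisymm (image_subset_image (erase_subset _ _))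
      intro y hy
      obtain ⟨x, hx, rfl⟩ := mem_image.1 hy
      by_cases hxa : x = a
      · subst hxa
        exact mem_image.2 ⟨b, mem_erase.2 ⟨hab.symm, hb⟩, hf.symm⟩
      · exact mem_image_of_mem _ (mem_erase.2 ⟨hxa, hx⟩)
    rw [this, card_erase_of_mem ha]; omega
  refine ⟨a, b, hab, ha, hb, hf, ?_⟩
  intro x hx y hy hxy
  have ka := key a ha b hb hab hf
  have kb := key b hb a ha hab.symm hf.symm
  by_contra! hcon
  obtain ⟨h1, h2, h3⟩ := hcon
  by_cases hxa : x = a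
  · have hyb := h2 hxa
    exact h1 (kb (by simp [hxa, hab, ha]) (by simp [hy, hyb]) hxy)
  · by_cases hya : y = a
    · have hxb : x ≠ b := fun h => h3 h hya
      exact h1 (kb (by simp [hx, hxb]) (by simp [hya, hab, ha]) hxy)
    · exact h1 (ka (by simp [hx, hxa]) (by simp [hy, hya]) hxy)

variable {P I L : Type*} [LinearOrder L] [Fintype P] [Fintype I]

def Dom (r : I → P → L) (q : Finset P × Finset I) : Prop :=
  ∀ y, ∃ i ∈ q.2, ∀ x ∈ q.1, r i y ≤ r i x

def Room (r : I → P → L) (q : Finset P × Finset I) : Prop :=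
  Dom r q ∧ #q.1 = #q.2

def Door (r : I → P → L) (c : P → I) (i0 : I) (q : Finset P × Finset I) : Prop :=
  Dom r q ∧ #q.1 + 1 = #q.2 ∧ i0 ∈ q.2 ∧ q.1.image c = q.2.erase i0

def Inc (q d : Finset P × Finset I) : Prop :=
  (d.2 = q.2 ∧ ∃ x, x ∉ d.1 ∧ q.1 = insert x d.1) ∨
  (q.1 = d.1 ∧ ∃ j, j ∉ q.2 ∧ d.2 = insert j q.2)

def Qk (r : I → P → L) (m : I → P) (τ : Finset P) (D : Finset I) (a : I)
    (q : Finset P × Finset I) : Prop :=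
  q = (τ, D.erase a) ∨ ∃ x, (∀ k ∈ D, k ≠ a → r k (m k) < r k x) ∧ q = (insert x τ, D)

lemma qk_unique (r : I → P → L) (hr : ∀ i, Function.Injective (r i)) (m : I → P)
    (τ : Finset P) (D : Finset I) (a : I) (haD : a ∈ D) (hdom : Dom r (τ, D))
    (hcard : #τ + 1 = #D)
    (hm : ∀ i, m i ∈ τ ∧ ∀ x ∈ τ, r i (m i) ≤ r i x)
    (hs : ∀ x ∈ τ, ∃ k ∈ D, k ≠ a ∧ m k = x) :
    ∃ q, (Room r q ∧ Inc q (τ, D) ∧ Qk r m τ D a q) ∧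
      ∀ q', Room r q' → Qk r m τ D a q' → q' = q := by
  set M : Finset P := univ.filter (fun x => ∀ k ∈ D, k ≠ a → r k (m k) < r k x) with hM
  have memM : ∀ x, x ∈ M ↔ ∀ k ∈ D, k ≠ a → r k (m k) < r k x := by simp [hM]
  by_cases hne : M.Nonempty
  · obtain ⟨x, hxM, hmax⟩ := M.exists_max_image (r a) hne
    have hx := (memM x).1 hxM
    have hxτ : x ∉ τ := by
      intro h
      obtain ⟨k, hk, hka, rfl⟩ := hs x h
      exact lt_irrefl _ (hx k hk hka)
    have hxa : r a x ≤ r a (m a) := by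
      obtain ⟨k, hk, hk'⟩ := hdom x
      by_cases hka : k = a
      · subst hka; exact hk' _ (hm k).1
      · exact absurd (hk' _ (hm k).1) (not_le.2 (hx k hk hka))
    refine ⟨(insert x τ, D), ⟨⟨?_, ?_⟩, Or.inl ⟨rfl, x, hxτ, rfl⟩, Or.inr ⟨x, hx, rfl⟩⟩, ?_⟩
    · intro y
      by_cases hy : y ∈ M
      · refine ⟨a, haD, ?_⟩
        intro z hz
        rcases mem_insert.1 hz with rfl | hz
        · exact hmax y hy
        · exact (hmax y hy).trans (hxa.trans ((hm a).2 z hz))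
      · rw [memM] at hy
        push Not at hy
        obtain ⟨k, hk, hka, hle⟩ := hy
        refine ⟨k, hk, ?_⟩
        intro z hz
        rcases mem_insert.1 hz with rfl | hz
        · exact hle.trans (hx k hk hka).le
        · exact hle.trans ((hm k).2 z hz)
    · simp [card_insert_of_notMem hxτ, hcard]
    · rintro q' ⟨hq', -⟩ (rfl | ⟨x', hx', rfl⟩)
      · obtain ⟨k, hk, hk'⟩ := hq' x
        have := mem_erase.1 hk
        exact absurd (hk' _ (hm k).1) (not_le.2 (hx k this.2 this.1))
      · have : x' = x := by
          apply hr a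
          apply le_antisymm (hmax x' ((memM x').2 hx'))
          obtain ⟨k, hk, hk'⟩ := hq' x
          by_cases hka : k = a
          · subst hka; exact hk' _ (mem_insert_self _ _)
          · exact absurd (hk' _ (mem_insert_of_mem (hm k).1)) (not_le.2 (hx k hk hka))
        rw [this]
  · have hno : ∀ x, ¬ ∀ k ∈ D, k ≠ a → r k (m k) < r k x := by
      intro x hx
      exact hne ⟨x, (memM x).2 hx⟩
    refine ⟨(τ, D.erase a), ⟨⟨?_, ?_⟩, Or.inr ⟨rfl, a, by simp, by simp [insert_erase haD]⟩,
      Or.inl rfl⟩, ?_⟩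
    · intro y
      have := hno y
      push Not at this
      obtain ⟨k, hk, hka, hle⟩ := this
      exact ⟨k, mem_erase.2 ⟨hka, hk⟩, fun z hz => hle.trans ((hm k).2 z hz)⟩
    · simp only [card_erase_of_mem haD]; omega
    · rintro q' - (rfl | ⟨x', hx', rfl⟩)
      · rfl
      · exact absurd hx' (hno x')

lemma door_rooms (r : I → P → L) (hr : ∀ i, Function.Injective (r i))
    (τ : Finset P) (D : Finset I) (hdom : Dom r (τ, D))
    (hcard : #τ + 1 = #D) (hτ : τ.Nonempty) :
    #(univ.filter (fun q => Room r q ∧ Inc q (τ, D))) = 2 := by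
  have hex : ∀ i, ∃ z, z ∈ τ ∧ ∀ x ∈ τ, r i z ≤ r i x := fun i => by
    obtain ⟨z, hz, h⟩ := τ.exists_min_image (r i) hτ
    exact ⟨z, hz, h⟩
  choose m hm using hex
  have himg : D.image m = τ := by
    ext x
    constructor
    · intro h
      obtain ⟨i, -, rfl⟩ := mem_image.1 h
      exact (hm i).1
    · intro h
      obtain ⟨i, hi, h'⟩ := hdom x
      exact mem_image.2 ⟨i, hi, hr i (le_antisymm ((hm i).2 x h) (h' _ (hm i).1))⟩
  obtain ⟨a, b, hab, haD, hbD, hmab, hcol⟩ := collide D m (by rw [himg]; exact hcard)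
  have hs : ∀ a ∈ D, ∀ b ∈ D, a ≠ b → m a = m b → ∀ x ∈ τ, ∃ k ∈ D, k ≠ a ∧ m k = x := by
    intro a ha b hb hab hmab x hx
    rw [← himg] at hx
    obtain ⟨k, hk, rfl⟩ := mem_image.1 hx
    by_cases hka : k = a
    · subst hka; exact ⟨b, hb, hab.symm, hmab.symm⟩
    · exact ⟨k, hk, hka, rfl⟩
  have hsa := hs a haD b hbD hab hmab
  have hsb := hs b hbD a haD hab.symm hmab.symm
  obtain ⟨qa, ⟨hqa1, hqa2, hqa3⟩, hqa⟩ := qk_unique r hr m τ D a haD hdom hcard hm hsa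
  obtain ⟨qb, ⟨hqb1, hqb2, hqb3⟩, hqb⟩ := qk_unique r hr m τ D b hbD hdom hcard hm hsb
  have hnm : ∀ a x, (∀ x ∈ τ, ∃ k ∈ D, k ≠ a ∧ m k = x) →
      (∀ k ∈ D, k ≠ a → r k (m k) < r k x) → x ∉ τ := by
    intro a x hs hx h
    obtain ⟨k, hk, hka, rfl⟩ := hs x h
    exact lt_irrefl _ (hx k hk hka)
  have hne : qa ≠ qb := by
    rintro rfl
    rcases hqa3 with h1 | ⟨x, hx, h1⟩
    · rcases hqb3 with h2 | ⟨y, hy, h2⟩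
      · rw [h1] at h2
        have h3 := (Prod.ext_iff.1 h2).2
        have : b ∈ D.erase a := mem_erase.2 ⟨hab.symm, hbD⟩
        simp only at h3
        rw [h3] at this
        simp at this
      · rw [h1] at h2
        have h3 := (Prod.ext_iff.1 h2).1
        simp only at h3
        apply hnm b y hsb hy
        rw [h3]; exact mem_insert_self _ _
    · rcases hqb3 with h2 | ⟨y, hy, h2⟩
      · rw [h1] at h2
        have h3 := (Prod.ext_iff.1 h2).1
        simp only at h3
        apply hnm a x hsa hx
        rw [← h3]; exact mem_insert_self _ _
      · rw [h1] at h2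
        have h3 := (Prod.ext_iff.1 h2).1
        simp only at h3
        have hxy : x = y := by
          have : x ∈ insert y τ := by rw [← h3]; exact mem_insert_self _ _
          rcases mem_insert.1 this with h | h
          · exact h
          · exact absurd h (hnm a x hsa hx)
        subst hxy
        obtain ⟨k, hk, hk'⟩ := hdom x
        have := hk' _ (hm k).1
        by_cases hka : k = a
        · exact absurd this (not_le.2 (hy k hk (hka ▸ hab)))
        · exact absurd this (not_le.2 (hx k hk hka))
  have : univ.filter (fun q => Room r q ∧ Inc q (τ, D)) = {qa, qb} := by
    ext q
    simp only [mem_filter, mem_univ, true_and, mem_insert, mem_singleton]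
    constructor
    · rintro ⟨hq, hinc⟩
      suffices Qk r m τ D a q ∨ Qk r m τ D b q by
        rcases this with h | h
        · exact Or.inl (hqa q hq h)
        · exact Or.inr (hqb q hq h)
      obtain ⟨σ, C⟩ := q
      rcases hinc with ⟨h1, x, hx, h2⟩ | ⟨h1, j, hj, h2⟩
      · simp only at h1 h2 hx
        subst h1 h2
        have hex' : ∀ i, ∃ z, z ∈ insert x τ ∧ ∀ y ∈ insert x τ, r i z ≤ r i y := fun i => by
          obtain ⟨z, hz, h⟩ := (insert x τ).exists_min_image (r i) (insert_nonempty _ _)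
          exact ⟨z, hz, h⟩
        choose m' hm' using hex'
        have himg' : D.image m' = insert x τ := by
          ext y
          constructor
          · intro h
            obtain ⟨i, -, rfl⟩ := mem_image.1 h
            exact (hm' i).1
          · intro h
            obtain ⟨i, hi, h'⟩ := hq.1 y
            exact mem_image.2 ⟨i, hi, hr i (le_antisymm ((hm' i).2 y h) (h' _ (hm' i).1))⟩
        have hinj : Set.InjOn m' (D : Finset I) := by
          apply card_image_iff.1
          rw [himg']; exact hq.2
        obtain ⟨k0, hk0, hk0x⟩ : ∃ k ∈ D, m' k = x := by
          have : x ∈ D.image m' := by rw [himg']; exact mem_insert_self _ _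
          simpa using this
        have hoth : ∀ k ∈ D, k ≠ k0 → m' k = m k ∧ r k (m k) < r k x := by
          intro k hk hkk
          have h1 : m' k ≠ x := fun h => hkk (hinj hk hk0 (h.trans hk0x.symm))
          have h2 : m' k ∈ τ := (mem_insert.1 (hm' k).1).resolve_left h1
          have h3 : m' k = m k :=
            hr k (le_antisymm ((hm' k).2 _ (mem_insert_of_mem (hm k).1)) ((hm k).2 _ h2))
          refine ⟨h3, ?_⟩
          rw [← h3]
          exact lt_of_le_of_ne ((hm' k).2 x (mem_insert_self _ _)) (fun h => h1 (hr k h))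
        by_cases hka : k0 = a
        · left; right
          exact ⟨x, fun k hk hkk => (hoth k hk (by rw [hka]; exact hkk)).2, rfl⟩
        · by_cases hkb : k0 = b
          · right; right
            exact ⟨x, fun k hk hkk => (hoth k hk (by rw [hkb]; exact hkk)).2, rfl⟩
          · exfalso
            apply hab
            apply hinj haD hbD
            rw [(hoth a haD (Ne.symm hka)).1, (hoth b hbD (Ne.symm hkb)).1, hmab]
      · simp only at h1 h2 hj
        subst h1 h2
        obtain ⟨k, hk, hk'⟩ := hq.1 (m j)
        have hk'' : m j = m k :=
          (hr k (le_antisymm ((hm k).2 _ (hm j).1) (hk' _ (hm k).1))).symm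
        have hjk : j ≠ k := fun h => hj (h ▸ hk)
        rcases hcol j (mem_insert_self _ _) k (mem_insert_of_mem hk) hk'' with h | ⟨h, -⟩ | ⟨h, -⟩
        · exact absurd h hjk
        · left; left; rw [← h, erase_insert hj]
        · right; left; rw [← h, erase_insert hj]
    · rintro (rfl | rfl)
      · exact ⟨hqa1, hqa2⟩
      · exact ⟨hqb1, hqb2⟩
  rw [this, card_pair hne]

lemma outer_rooms [Nonempty P] (r : I → P → L) (hr : ∀ i, Function.Injective (r i)) (i0 : I) :
    #(univ.filter (fun q => Room r q ∧ Inc q ((∅ : Finset P), ({i0} : Finset I)))) = 1 := by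
  obtain ⟨x, -, hx⟩ := (univ : Finset P).exists_max_image (r i0) univ_nonempty
  rw [card_eq_one]
  refine ⟨({x}, {i0}), ?_⟩
  ext ⟨σ, C⟩
  simp only [mem_filter, mem_univ, true_and, mem_singleton]
  constructor
  · rintro ⟨⟨h1, h2⟩, ⟨h3, y, -, h4⟩ | ⟨h3, j, hj, h4⟩⟩
    · simp only at h3 h4
      subst h3 h4
      obtain ⟨i, hi, h⟩ := h1 x
      simp only [mem_singleton] at hi
      subst hi
      have : x = y := hr i (le_antisymm (h y (by simp)) (hx y (mem_univ _)))
      simp [this]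
    · simp only at h3 h4 h2
      subst h3
      have : C = ∅ := by simpa using h2.symm
      subst this
      obtain ⟨i, hi, h⟩ := h1 x
      simp at hi
  · intro h
    rw [Prod.mk.injEq] at h
    obtain ⟨rfl, rfl⟩ := h
    refine ⟨⟨fun y => ⟨i0, by simp, by simpa using hx y (mem_univ _)⟩, by simp⟩, Or.inl ⟨rfl, x, by simp, by simp⟩⟩

lemma room_doors_colorful (r : I → P → L) (c : P → I) (i0 : I) (q : Finset P × Finset I)
    (hq : Room r q) (hc : q.1.image c = q.2) :
    #(univ.filter (fun d => Door r c i0 d ∧ Inc q d)) = 1 := by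
  obtain ⟨σ, C⟩ := q
  obtain ⟨hdom, hcard⟩ := hq
  simp only at hc hcard
  have hinj : Set.InjOn c (σ : Finset P) := by
    apply card_image_iff.1; rw [hc, hcard]
  rw [card_eq_one]
  by_cases hi : i0 ∈ C
  · obtain ⟨x, hx, hxi⟩ : ∃ x ∈ σ, c x = i0 := by rw [← hc] at hi; simpa using hi
    refine ⟨(σ.erase x, C), ?_⟩
    ext ⟨τ, D⟩
    simp only [mem_filter, mem_univ, true_and, mem_singleton]
    constructor
    · rintro ⟨⟨h1, h2, h3, h4⟩, ⟨h5, y, h6, h7⟩ | ⟨h5, j, h6, h7⟩⟩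
      · simp only at *
        subst h5 h7
        have : x = y := by
          by_contra hxy
          have hxt : x ∈ τ := (mem_insert.1 hx).resolve_left hxy
          have : i0 ∈ D.erase i0 := by rw [← h4]; exact mem_image.2 ⟨x, hxt, hxi⟩
          simp at this
        subst this
        rw [erase_insert h6]
      · simp only at *
        subst h5 h7
        rw [hc] at h4
        have : i0 ∈ (insert j C).erase i0 := h4 ▸ hi
        simp at this
    · intro h
      rw [Prod.mk.injEq] at h
      obtain ⟨rfl, rfl⟩ := h
      refine ⟨⟨?_, ?_, hi, ?_⟩, Or.inl ⟨rfl, x, by simp, by simp [insert_erase hx]⟩⟩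
      · intro y
        obtain ⟨i, hi, h⟩ := hdom y
        exact ⟨i, hi, fun z hz => h z (mem_of_mem_erase hz)⟩
      · simp only [card_erase_of_mem hx]
        have := card_pos.2 ⟨x, hx⟩
        omega
      · ext i
        simp only [mem_image, mem_erase, ← hc, ← hxi]
        constructor
        · rintro ⟨y, ⟨hy1, hy2⟩, rfl⟩
          exact ⟨fun h => hy1 (hinj hy2 hx h), y, hy2, rfl⟩
        · rintro ⟨h1, y, hy2, rfl⟩
          exact ⟨y, ⟨fun h => h1 (h ▸ rfl), hy2⟩, rfl⟩
  · refine ⟨(σ, insert i0 C), ?_⟩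
    ext ⟨τ, D⟩
    simp only [mem_filter, mem_univ, true_and, mem_singleton]
    constructor
    · rintro ⟨⟨h1, h2, h3, h4⟩, ⟨h5, y, h6, h7⟩ | ⟨h5, j, h6, h7⟩⟩
      · simp only at *
        subst h5
        exact absurd h3 hi
      · simp only at *
        subst h5 h7
        rcases mem_insert.1 h3 with rfl | h
        · rfl
        · exact absurd h hi
    · intro h
      rw [Prod.mk.injEq] at h
      obtain ⟨rfl, rfl⟩ := h
      refine ⟨⟨?_, ?_, by simp, ?_⟩, Or.inr ⟨rfl, i0, hi, rfl⟩⟩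
      · intro y
        obtain ⟨i, hi, h⟩ := hdom y
        exact ⟨i, mem_insert_of_mem hi, h⟩
      · simp [card_insert_of_notMem hi, hcard]
      · simp [hc, erase_insert hi]

lemma room_doors_other (r : I → P → L) (c : P → I) (i0 : I) (q : Finset P × Finset I)
    (hq : Room r q) (hc : q.1.image c ≠ q.2) :
    Even #(univ.filter (fun d => Door r c i0 d ∧ Inc q d)) := by
  obtain ⟨σ, C⟩ := q
  obtain ⟨hdom, hcard⟩ := hq
  simp only at hc hcard
  rcases eq_empty_or_nonempty (univ.filter (fun d => Door r c i0 d ∧ Inc (σ, C) d)) with h0 | hne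
  · rw [h0]; simp
  suffices #(univ.filter (fun d => Door r c i0 d ∧ Inc (σ, C) d)) = 2 by rw [this]; exact even_two
  have hdomE : ∀ x, Dom r (σ.erase x, C) := by
    intro x y
    obtain ⟨i, hi, h⟩ := hdom y
    exact ⟨i, hi, fun z hz => h z (mem_of_mem_erase hz)⟩
  have hdomI : ∀ j, Dom r (σ, insert j C) := by
    intro j y
    obtain ⟨i, hi, h⟩ := hdom y
    exact ⟨i, mem_insert_of_mem hi, h⟩
  have hcardE : ∀ x ∈ σ, #(σ.erase x) + 1 = #C := by
    intro x hx
    rw [card_erase_of_mem hx]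
    have := card_pos.2 ⟨x, hx⟩
    omega
  -- i0 lies in C
  have hi : i0 ∈ C := by
    obtain ⟨⟨τ, D⟩, hd⟩ := hne
    simp only [mem_filter, mem_univ, true_and] at hd
    obtain ⟨⟨h1, h2, h3, h4⟩, ⟨h5, y, h6, h7⟩ | ⟨h5, j, h6, h7⟩⟩ := hd
    · simp only at *
      exact h5 ▸ h3
    · simp only at *
      subst h5 h7
      by_contra hi
      rcases mem_insert.1 h3 with rfl | h
      · exact hc (by rw [h4, erase_insert h6])
      · exact hi h
  by_cases himg : σ.image c = C.erase i0
  · obtain ⟨a, b, hab, ha, hb, hcab, hcol⟩ := collide σ c (by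
      rw [himg, card_erase_of_mem hi, hcard]
      have := card_pos.2 ⟨_, hi⟩
      omega)
    rw [card_eq_two]
    refine ⟨(σ.erase a, C), (σ.erase b, C), ?_, ?_⟩
    · intro h
      have h := (Prod.ext_iff.1 h).1
      simp only at h
      have : a ∈ σ.erase b := mem_erase.2 ⟨hab, ha⟩
      rw [← h] at this
      simp at this
    · have hE : ∀ a ∈ σ, ∀ b ∈ σ, a ≠ b → c a = c b → Door r c i0 (σ.erase a, C) ∧
          Inc (σ, C) (σ.erase a, C) := by
        intro a ha b hb hab hcab
        refine ⟨⟨hdomE a, hcardE a ha, hi, ?_⟩, Or.inl ⟨rfl, a, by simp, by simp [insert_erase ha]⟩⟩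
        simp only
        rw [← himg]
        apply Subset.antisymm (image_subset_image (erase_subset _ _))
        intro y hy
        obtain ⟨x, hx, rfl⟩ := mem_image.1 hy
        by_cases hxa : x = a
        · subst hxa
          exact mem_image.2 ⟨b, mem_erase.2 ⟨hab.symm, hb⟩, hcab.symm⟩
        · exact mem_image_of_mem _ (mem_erase.2 ⟨hxa, hx⟩)
      ext ⟨τ, D⟩
      simp only [mem_filter, mem_univ, true_and, mem_insert, mem_singleton]
      constructor
      · rintro ⟨⟨h1, h2, h3, h4⟩, ⟨h5, y, h6, h7⟩ | ⟨h5, j, h6, h7⟩⟩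
        · simp only at *
          subst h5 h7
          have hy : c y ∈ τ.image c := by
            rw [h4, ← himg]; exact mem_image_of_mem _ (mem_insert_self _ _)
          obtain ⟨z, hz, hzy⟩ := mem_image.1 hy
          rcases hcol y (mem_insert_self _ _) z (mem_insert_of_mem hz) hzy.symm with
            h | ⟨h, -⟩ | ⟨h, -⟩
          · exact absurd (h ▸ hz) h6
          · left; rw [← h, erase_insert h6]
          · right; rw [← h, erase_insert h6]
        · simp only at *
          subst h5 h7
          have hj : j ∈ (insert j C).erase i0 :=
            mem_erase.2 ⟨fun h => h6 (h ▸ hi), mem_insert_self _ _⟩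
          rw [← h4, himg] at hj
          exact absurd (mem_of_mem_erase hj) h6
      · rintro (h | h)
        · rw [h]; exact hE a ha b hb hab hcab
        · rw [h]; exact hE b hb a ha hab.symm hcab.symm
  · obtain ⟨j, hj, himg2⟩ : ∃ j, j ∉ C ∧ σ.image c = insert j (C.erase i0) := by
      obtain ⟨⟨τ, D⟩, hd⟩ := hne
      simp only [mem_filter, mem_univ, true_and] at hd
      obtain ⟨⟨h1, h2, h3, h4⟩, ⟨h5, y, h6, h7⟩ | ⟨h5, j, h6, h7⟩⟩ := hd
      · simp only at *
        subst h5 h7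
        rw [image_insert, h4] at himg hc
        refine ⟨c y, ?_, by rw [image_insert, h4]⟩
        intro hy
        by_cases hyi : c y = i0
        · exact hc (by rw [hyi, insert_erase hi])
        · exact himg (insert_eq_of_mem (mem_erase.2 ⟨hyi, hy⟩))
      · simp only at *
        subst h5 h7
        refine ⟨j, h6, ?_⟩
        rw [h4, erase_insert_of_ne]
        rintro rfl
        exact h6 hi
    have hji : j ≠ i0 := fun h => hj (h ▸ hi)
    have hinj : Set.InjOn c (σ : Finset P) := by
      apply card_image_iff.1
      rw [himg2, card_insert_of_notMem (fun h => hj (mem_of_mem_erase h)), card_erase_of_mem hi,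
        hcard]
      have := card_pos.2 ⟨_, hi⟩
      omega
    obtain ⟨x, hx, hxj⟩ : ∃ x ∈ σ, c x = j := by
      have : j ∈ σ.image c := by rw [himg2]; exact mem_insert_self _ _
      simpa using this
    rw [card_eq_two]
    refine ⟨(σ.erase x, C), (σ, insert j C), ?_, ?_⟩
    · intro h
      have h := (Prod.ext_iff.1 h).1
      simp only at h
      rw [← h] at hx
      simp at hx
    · ext ⟨τ, D⟩
      simp only [mem_filter, mem_univ, true_and, mem_insert, mem_singleton]
      constructor
      · rintro ⟨⟨h1, h2, h3, h4⟩, ⟨h5, y, h6, h7⟩ | ⟨h5, k, h6, h7⟩⟩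
        · left
          simp only at *
          subst h5 h7
          have : x = y := by
            by_contra hxy
            have hxt : x ∈ τ := (mem_insert.1 hx).resolve_left hxy
            have : j ∈ D.erase i0 := by rw [← h4]; exact mem_image.2 ⟨x, hxt, hxj⟩
            exact hj (mem_of_mem_erase this)
          subst this
          rw [erase_insert h6]
        · right
          simp only at *
          subst h5 h7
          have : j ∈ (insert k C).erase i0 := by
            rw [← h4, himg2]; exact mem_insert_self _ _
          have := (mem_insert.1 (mem_of_mem_erase this)).resolve_right hj
          rw [this]
      · rintro (h | h)
        · rw [h]
          refine ⟨⟨hdomE x, hcardE x hx, hi, ?_⟩,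
            Or.inl ⟨rfl, x, by simp, by simp [insert_erase hx]⟩⟩
          simp only
          have h1 : (σ.erase x).image c = (σ.image c).erase (c x) := by
            ext i
            simp only [mem_image, mem_erase]
            constructor
            · rintro ⟨y, ⟨hy1, hy2⟩, rfl⟩
              exact ⟨fun h => hy1 (hinj hy2 hx h), y, hy2, rfl⟩
            · rintro ⟨h1, y, hy2, rfl⟩
              exact ⟨y, ⟨fun h => h1 (h ▸ rfl), hy2⟩, rfl⟩
          rw [h1, himg2, hxj, erase_insert (fun h => hj (mem_of_mem_erase h))]
        · rw [h]
          refine ⟨⟨hdomI j, ?_, mem_insert_of_mem hi, ?_⟩, Or.inr ⟨rfl, j, hj, rfl⟩⟩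
          · simp [card_insert_of_notMem hj, hcard]
          · simp only
            rw [himg2, erase_insert_of_ne hji]

theorem exists_colorful [Nonempty P] [Nonempty I] (r : I → P → L)
    (hr : ∀ i, Function.Injective (r i)) (c : P → I) :
    ∃ q : Finset P × Finset I, Dom r q ∧ q.1.image c = q.2 := by
  by_contra! hcon
  obtain ⟨i0⟩ := ‹Nonempty I›
  have hdc := sum_card_bipartiteAbove_eq_sum_card_bipartiteBelow
    (s := univ.filter (fun q : Finset P × Finset I => Room r q))
    (t := univ.filter (fun d : Finset P × Finset I => Door r c i0 d)) (Inc (P := P) (I := I))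
  simp only [bipartiteAbove, bipartiteBelow, filter_filter] at hdc
  have hL : Even (∑ q ∈ univ.filter (fun q : Finset P × Finset I => Room r q),
      #(univ.filter (fun d => Door r c i0 d ∧ Inc q d))) := by
    apply even_sum
    intro q hq
    have hq := (mem_filter.1 hq).2
    exact room_doors_other r c i0 q hq (hcon q hq.1)
  have hmem : ((∅ : Finset P), ({i0} : Finset I)) ∈
      univ.filter (fun d : Finset P × Finset I => Door r c i0 d) := by
    refine mem_filter.2 ⟨mem_univ _, ?_, by simp, by simp, by simp⟩
    intro y
    exact ⟨i0, by simp, by simp⟩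
  rw [hdc, ← add_sum_erase _ _ hmem, outer_rooms r hr i0] at hL
  have hR : Even (∑ d ∈ (univ.filter (fun d : Finset P × Finset I => Door r c i0 d)).erase
      ((∅ : Finset P), ({i0} : Finset I)), #(univ.filter (fun q => Room r q ∧ Inc q d))) := by
    apply even_sum
    rintro ⟨τ, D⟩ hd
    have hd' := mem_erase.1 hd
    obtain ⟨h1, h2, h3, h4⟩ := (mem_filter.1 hd'.2).2
    rcases eq_empty_or_nonempty τ with rfl | hτ
    · exfalso
      apply hd'.1
      simp only [card_empty, zero_add] at h2 h3
      obtain ⟨i, hi⟩ := card_eq_one.1 h2.symm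
      subst hi
      simp only [mem_singleton] at h3
      rw [h3]
    · rw [door_rooms r hr τ D h1 h2 hτ]; exact even_two
  rw [Nat.even_add] at hL
  have := hL.2 hR
  simp at this

end LS

namespace LS
open Finset Classical

lemma approx_simplex {I : Type*} [Fintype I] [Nonempty I] (f : (I → ℝ) → (I → ℝ))
    (hf : ContinuousOn f (stdSimplex ℝ I)) (hmap : Set.MapsTo f (stdSimplex ℝ I) (stdSimplex ℝ I))
    (ε : ℝ) (hε : 0 < ε) : ∃ x ∈ stdSimplex ℝ I, ∀ i, x i - ε ≤ f x i := by
  have huc := (isCompact_stdSimplex ℝ I).uniformContinuousOn_of_continuous hf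
  rw [Metric.uniformContinuousOn_iff] at huc
  obtain ⟨δ, hδ, huc⟩ := huc (ε / 2) (by positivity)
  set n := Fintype.card I with hn
  obtain ⟨N, hN⟩ := exists_nat_gt ((n : ℝ) / min δ (ε / 2))
  have hmin : 0 < min δ (ε / 2) := by positivity
  have hN0 : (0 : ℝ) < N := lt_of_le_of_lt (by positivity) hN
  have hN0' : 0 < N := by exact_mod_cast hN0
  have hnN : (n : ℝ) / N < min δ (ε / 2) := by
    rw [div_lt_iff₀ hmin] at hN
    rw [div_lt_iff₀ hN0]; linarith
  let P := {v : I → Fin (N + 1) // ∑ i, (v i : ℕ) = N}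
  have mk : ∀ u : I → ℕ, ∑ i, u i = N → ∃ v : P, ∀ i, (v.1 i : ℕ) = u i := by
    intro u hu
    have hle : ∀ i, u i < N + 1 := by
      intro i
      have := single_le_sum (f := u) (fun j _ => Nat.zero_le _) (mem_univ i)
      omega
    exact ⟨⟨fun i => ⟨u i, hle i⟩, by simpa using hu⟩, fun i => rfl⟩
  obtain ⟨j0⟩ := ‹Nonempty I›
  haveI : Nonempty I := ⟨j0⟩
  haveI : Nonempty P := by
    obtain ⟨v, -⟩ := mk (fun i => if i = j0 then N else 0) (by simp)
    exact ⟨v⟩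
  let pt : P → I → ℝ := fun v i => (v.1 i : ℕ) / (N : ℝ)
  have hpt : ∀ v, pt v ∈ stdSimplex ℝ I := by
    intro v
    refine ⟨fun i => by positivity, ?_⟩
    simp only [pt]
    rw [← sum_div, div_eq_one_iff_eq hN0.ne']
    exact_mod_cast v.2
  have hcol : ∀ v, ∃ i, pt v i ≤ f (pt v) i := by
    intro v
    by_contra! h
    have h1 := sum_lt_sum_of_nonempty (s := univ) univ_nonempty (fun i _ => h i)
    rw [(hpt v).2, (hmap (hpt v)).2] at h1
    exact lt_irrefl _ h1
  choose c hc using hcol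
  let r : I → P → ℕ ×ₗ ℕ := fun i v => toLex ((v.1 i : ℕ), (Fintype.equivFin P v : ℕ))
  have hr : ∀ i, Function.Injective (r i) := by
    intro i v w h
    have h1 := (Prod.ext_iff.1 (toLex.injective h)).2
    exact (Fintype.equivFin P).injective (Fin.ext h1)
  have hrle : ∀ i v w, r i v ≤ r i w → (v.1 i : ℕ) ≤ w.1 i := by
    intro i v w h
    rcases (Prod.Lex.le_iff).1 h with h | h
    · exact h.le
    · exact h.1.le
  obtain ⟨⟨σ, C⟩, hdom, himg⟩ := exists_colorful r hr c
  simp only at himg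
  have hσ : σ.Nonempty := by
    rw [nonempty_iff_ne_empty]
    rintro rfl
    obtain ⟨i, hi, -⟩ := hdom (Classical.arbitrary P)
    simp only at hi
    rw [← himg] at hi
    simp at hi
  obtain ⟨x0, hx0⟩ := hσ
  have hex : ∀ i, ∃ z ∈ σ, ∀ x ∈ σ, (z.1 i : ℕ) ≤ x.1 i := fun i =>
    σ.exists_min_image (fun z => (z.1 i : ℕ)) ⟨x0, hx0⟩
  choose z hzσ hz using hex
  have hsum : N < ∑ i ∈ C, ((z i).1 i + 1 : ℕ) := by
    by_contra! hle
    set j := c x0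
    have hj : j ∈ C := by rw [← himg]; exact mem_image_of_mem _ hx0
    set u : I → ℕ := fun i => (if i ∈ C then ((z i).1 i + 1 : ℕ) else 0) +
      (if i = j then N - ∑ i ∈ C, ((z i).1 i + 1 : ℕ) else 0) with hu
    obtain ⟨y, hy⟩ := mk u (by
      rw [hu, sum_add_distrib, sum_ite_mem, univ_inter]
      simp only [sum_ite_eq', mem_univ, if_true]
      omega)
    obtain ⟨i, hi, h⟩ := hdom y
    have h1 := hrle i _ _ (h (z i) (hzσ i))
    rw [hy i] at h1
    simp only at hi
    simp only [hu, hi, if_true] at h1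
    omega
  obtain ⟨m, hm1, hm2, hm3⟩ : ∃ m : I → ℕ, (∀ x ∈ σ, ∀ i, m i ≤ x.1 i) ∧ (N < ∑ i, m i + n) ∧
      ∀ i, i ∉ C → m i = 0 := by
    refine ⟨fun i => if i ∈ C then ((z i).1 i : ℕ) else 0, ?_, ?_, ?_⟩
    · intro x hx i
      by_cases hi : i ∈ C
      · simp only [hi, if_true]; exact hz i x hx
      · simp [hi]
    · rw [sum_ite_mem, univ_inter]
      rw [sum_add_distrib] at hsum
      have : ∑ i ∈ C, 1 ≤ n := by simpa using card_le_univ C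
      omega
    · intro i hi; simp [hi]
  have hlt : ∀ x ∈ σ, ∀ i, (x.1 i : ℕ) < m i + n := by
    intro x hx i
    have h1 := x.2
    rw [← add_sum_erase _ _ (mem_univ i)] at h1 hm2
    have h2 : ∑ k ∈ univ.erase i, m k ≤ ∑ k ∈ univ.erase i, (x.1 k : ℕ) :=
      sum_le_sum fun k _ => hm1 x hx k
    omega
  have hclose : ∀ x ∈ σ, ∀ y ∈ σ, ∀ i, pt x i - pt y i ≤ n / N := by
    intro x hx y hy i
    simp only [pt]
    rw [← sub_div]
    gcongr
    have h1 := hlt x hx i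
    have h2 := hm1 y hy i
    have : (x.1 i : ℕ) ≤ (y.1 i : ℕ) + n := by omega
    have : ((x.1 i : ℕ) : ℝ) ≤ (y.1 i : ℕ) + n := by exact_mod_cast this
    linarith
  refine ⟨pt x0, hpt x0, ?_⟩
  intro i
  have hε2 : (n : ℝ) / N < ε / 2 := hnN.trans_le (min_le_right _ _)
  by_cases hi : i ∈ C
  · rw [← himg] at hi
    obtain ⟨x, hx, rfl⟩ := mem_image.1 hi
    have h1 := hc x
    have h2 := hclose x0 hx0 x hx (c x)
    have h3 : dist (pt x) (pt x0) < δ := by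
      refine lt_of_le_of_lt ?_ (hnN.trans_le (min_le_left _ _))
      rw [dist_pi_le_iff (by positivity)]
      intro k
      rw [Real.dist_eq, abs_le]
      constructor
      · linarith [hclose x0 hx0 x hx k]
      · exact hclose x hx x0 hx0 k
    have h4 := huc _ (hpt x) _ (hpt x0) h3
    have h5 := (dist_le_pi_dist (f (pt x)) (f (pt x0)) (c x)).trans_lt h4
    rw [Real.dist_eq, abs_lt] at h5
    linarith [h5.2]
  · have h1 := hlt x0 hx0 i
    rw [hm3 i hi, zero_add] at h1
    have h2 : pt x0 i ≤ n / N := by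
      simp only [pt]
      gcongr
    have := (hmap (hpt x0)).1 i
    linarith

theorem brouwer_simplex {I : Type*} [Fintype I] [Nonempty I] (f : (I → ℝ) → (I → ℝ))
    (hf : ContinuousOn f (stdSimplex ℝ I))
    (hmap : Set.MapsTo f (stdSimplex ℝ I) (stdSimplex ℝ I)) :
    ∃ x ∈ stdSimplex ℝ I, f x = x := by
  have hcont : ContinuousOn (fun x => ∑ i, max 0 (x i - f x i)) (stdSimplex ℝ I) := by
    apply continuousOn_finsetSum
    intro i _
    have h1 : ContinuousOn (fun x => f x i) (stdSimplex ℝ I) :=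
      (continuous_apply i).comp_continuousOn hf
    have h2 : ContinuousOn (fun x : I → ℝ => x i) (stdSimplex ℝ I) :=
      (continuous_apply i).continuousOn
    exact continuousOn_const.sup (h2.sub h1)
  obtain ⟨y, hy, -⟩ := approx_simplex f hf hmap 1 one_pos
  obtain ⟨x, hx, hmin⟩ := (isCompact_stdSimplex ℝ I).exists_isMinOn ⟨y, hy⟩ hcont
  have hle : ∑ i, max 0 (x i - f x i) ≤ 0 := by
    apply le_of_forall_pos_le_add
    intro ε hε
    have hn : (0 : ℝ) < Fintype.card I := by exact_mod_cast Fintype.card_pos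
    obtain ⟨y, hy, hy'⟩ := approx_simplex f hf hmap (ε / Fintype.card I) (by positivity)
    have h1 : ∑ i, max 0 (x i - f x i) ≤ ∑ i, max 0 (y i - f y i) := hmin hy
    have h2 : ∑ i, max 0 (y i - f y i) ≤ ∑ i : I, ε / Fintype.card I := by
      apply sum_le_sum
      intro i _
      exact max_le (by positivity) (by linarith [hy' i])
    rw [sum_const, card_univ, nsmul_eq_mul, mul_div_cancel₀ _ hn.ne'] at h2
    linarith
  have hle2 : ∀ i, x i ≤ f x i := by
    intro i
    have h1 := single_le_sum (f := fun i => max 0 (x i - f x i))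
      (fun j _ => le_max_left _ _) (mem_univ i)
    have h2 := le_max_right 0 (x i - f x i)
    linarith
  refine ⟨x, hx, ?_⟩
  have h3 := (sum_eq_sum_iff_of_le (s := univ) (fun i _ => hle2 i)).1
    (by rw [hx.2, (hmap hx).2])
  funext i
  exact (h3 i (mem_univ i)).symm

lemma schauder_approx {X : Type*} [NormedAddCommGroup X] [NormedSpace ℝ X]
    (F : X → X) (hF : Continuous F) (B K : Set X) (hB : Convex ℝ B) (hBn : B.Nonempty)
    (hK : IsCompact K) (hKB : K ⊆ B) (hFK : ∀ x ∈ B, F x ∈ K) (ε : ℝ) (hε : 0 < ε) :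
    ∃ x ∈ B, ‖x - F x‖ ≤ ε := by
  obtain ⟨t, htK, htf, hcov⟩ := hK.finite_cover_balls hε
  haveI : Fintype t := htf.fintype
  have hcov' : ∀ y ∈ K, ∃ i : t, dist y i < ε := by
    intro y hy
    have := hcov hy
    simp only [Set.mem_iUnion, Metric.mem_ball] at this
    obtain ⟨i, hi, h⟩ := this
    exact ⟨⟨i, hi⟩, h⟩
  haveI : Nonempty t := by
    obtain ⟨b, hb⟩ := hBn
    obtain ⟨i, -⟩ := hcov' _ (hFK b hb)
    exact ⟨i⟩
  let w : t → X → ℝ := fun i y => max 0 (ε - dist y i)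
  have hw0 : ∀ i y, 0 ≤ w i y := fun i y => le_max_left _ _
  have hwc : ∀ i, Continuous (w i) := fun i => by
    simp only [w]; fun_prop
  let S : X → ℝ := fun y => ∑ i, w i y
  have hSc : Continuous S := continuous_finsetSum _ fun i _ => hwc i
  have hS : ∀ y ∈ K, 0 < S y := by
    intro y hy
    obtain ⟨i, hi⟩ := hcov' y hy
    apply sum_pos' (fun i _ => hw0 i y)
    exact ⟨i, mem_univ _, lt_max_of_lt_right (by linarith)⟩
  let e : (t → ℝ) → X := fun s => ∑ i, s i • (i : X)
  have hec : Continuous e := by simp only [e]; fun_prop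
  have heB : ∀ s ∈ stdSimplex ℝ t, e s ∈ B := by
    intro s hs
    exact hB.sum_mem (fun i _ => hs.1 i) hs.2 (fun i _ => hKB (htK i.2))
  let g : (t → ℝ) → (t → ℝ) := fun s i => w i (F (e s)) / S (F (e s))
  obtain ⟨s, hs, hgs⟩ := brouwer_simplex g (by
      apply continuousOn_pi.2
      intro i
      apply ContinuousOn.div
      · exact ((hwc i).comp (hF.comp hec)).continuousOn
      · exact (hSc.comp (hF.comp hec)).continuousOn
      · intro s hs
        exact (hS _ (hFK _ (heB s hs))).ne') (by
      intro s hs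
      have hpos := hS _ (hFK _ (heB s hs))
      refine ⟨fun i => div_nonneg (hw0 _ _) hpos.le, ?_⟩
      simp only [g]
      rw [← sum_div]
      exact div_self hpos.ne')
  refine ⟨e s, heB s hs, ?_⟩
  have h1 : e s - F (e s) = ∑ i, s i • ((i : X) - F (e s)) := by
    simp only [smul_sub, sum_sub_distrib, ← sum_smul, hs.2, one_smul, e]
  rw [h1]
  refine (norm_sum_le _ _).trans ?_
  have h2 : ∀ i ∈ (univ : Finset t), ‖s i • ((i : X) - F (e s))‖ ≤ s i * ε := by
    intro i _
    rw [norm_smul, Real.norm_of_nonneg (hs.1 i)]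
    by_cases h0 : s i = 0
    · simp [h0]
    · apply mul_le_mul_of_nonneg_left _ (hs.1 i)
      by_contra! hlt
      apply h0
      rw [← hgs]
      simp only [g]
      have : w i (F (e s)) = 0 := by
        simp only [w]
        apply max_eq_left
        rw [dist_comm, dist_eq_norm]
        linarith
      rw [this, zero_div]
  refine (sum_le_sum h2).trans ?_
  rw [← sum_mul, hs.2, one_mul]

lemma schauder {X : Type*} [NormedAddCommGroup X] [NormedSpace ℝ X]
    (F : X → X) (hF : Continuous F) (B K : Set X) (hB : Convex ℝ B) (hBn : B.Nonempty)
    (hK : IsCompact K) (hKB : K ⊆ B) (hFK : ∀ x ∈ B, F x ∈ K) : ∃ x ∈ B, F x = x := by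
  have h := fun k : ℕ => schauder_approx F hF B K hB hBn hK hKB hFK (1 / ((k : ℝ) + 1))
    (by positivity)
  choose x hxB hx using h
  obtain ⟨y, hyK, φ, hφ, hlim⟩ := hK.tendsto_subseq (fun k => hFK _ (hxB k))
  have h0 : Filter.Tendsto (fun k => x k - F (x k)) Filter.atTop (nhds 0) :=
    squeeze_zero_norm hx tendsto_one_div_add_atTop_nhds_zero_nat
  have h1 : Filter.Tendsto (fun k => x (φ k)) Filter.atTop (nhds y) := by
    have := (h0.comp hφ.tendsto_atTop).add hlim
    simpa [Function.comp_def] using this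
  have h2 : Filter.Tendsto (fun k => F (x (φ k))) Filter.atTop (nhds (F y)) :=
    (hF.tendsto y).comp h1
  exact ⟨y, hKB hyK, tendsto_nhds_unique h2 hlim⟩

end LS

/-- Leray–Schauder fixed point theorem: a continuous compact self-map of a real
Banach space whose "λ-fixed points" are uniformly bounded has a fixed point. -/
theorem leray_schauder_fixed_point
    {X : Type*} [NormedAddCommGroup X] [NormedSpace ℝ X] [CompleteSpace X]
    (T : X → X) (hT : Continuous T)
    (hcomp : ∀ s : Set X, Bornology.IsBounded s → IsCompact (closure (T '' s)))
    (R : ℝ) (hR : 0 < R)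
    (hbound : ∀ x : X, (∃ l : ℝ, l ∈ Set.Icc (0 : ℝ) 1 ∧ x = l • T x) → ‖x‖ ≤ R) :
    ∃ x : X, T x = x := by
  set M : ℝ := R + 1 with hM
  have hM0 : 0 < M := by linarith
  have hmax : ∀ y : X, 0 < max M ‖y‖ := fun y => lt_max_of_lt_left hM0
  let ρ : X → X := fun y => (M / max M ‖y‖) • y
  have hρ : Continuous ρ := by
    apply Continuous.smul _ continuous_id
    exact continuous_const.div (continuous_const.max continuous_norm) (fun y => (hmax y).ne')
  have hρn : ∀ y, ‖ρ y‖ ≤ M := by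
    intro y
    simp only [ρ]
    rw [norm_smul, Real.norm_of_nonneg (div_nonneg hM0.le (hmax y).le), div_mul_eq_mul_div,
      div_le_iff₀ (hmax y)]
    exact mul_le_mul_of_nonneg_left (le_max_right _ _) hM0.le
  have hK := (hcomp (Metric.closedBall 0 M) Metric.isBounded_closedBall).image hρ
  obtain ⟨x, hxB, hx⟩ := LS.schauder (fun x => ρ (T x)) (hρ.comp hT) (Metric.closedBall 0 M) _
    (convex_closedBall 0 M) ⟨0, by simp [hM0.le]⟩ hK
    (by rintro _ ⟨y, -, rfl⟩; simpa using hρn y)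
    (fun x hx => ⟨T x, subset_closure ⟨x, hx, rfl⟩, rfl⟩)
  have hxe : x = (M / max M ‖T x‖) • T x := hx.symm
  have hxR := hbound x ⟨M / max M ‖T x‖, ⟨div_nonneg hM0.le (hmax _).le,
    (div_le_one (hmax _)).2 (le_max_left _ _)⟩, hxe⟩
  refine ⟨x, ?_⟩
  by_cases hle : ‖T x‖ ≤ M
  · rw [max_eq_left hle, div_self hM0.ne', one_smul] at hxe
    exact hxe.symm
  · push Not at hle
    exfalso
    rw [max_eq_right hle.le] at hxe
    have hpos : 0 < ‖T x‖ := hM0.trans hle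
    have : ‖x‖ = M := by
      rw [hxe, norm_smul, Real.norm_of_nonneg (div_nonneg hM0.le hpos.le),
        div_mul_cancel₀ _ hpos.ne']
    linarith
end

section
/- For every real γ > 23/15: (i) the interval (1, min{(5γ−3)/(3γ), 1 + (−5 + √(5(180γ²−456γ+281)))/(30γ), (γ+1)/γ}) is nonempty; and (ii) every a in this interval satisfies 15(aγ)² + aγ(5 − 30γ) + 33γ − 23 < 0. -/
/-- For `γ > 23/15` the admissible interval for the Bogovskii exponent `a` is nonempty,
and every `a` in it makes the quadratic `15(aγ)² + aγ(5−30γ) + 33γ−23` negative. -/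
theorem admissible_interval_for_a (γ : ℝ) (hγ : 23 / 15 < γ) :
    (Set.Ioo (1 : ℝ)
      (min (min ((5 * γ - 3) / (3 * γ))
          (1 + (-5 + Real.sqrt (5 * (180 * γ ^ 2 - 456 * γ + 281))) / (30 * γ)))
        ((γ + 1) / γ))).Nonempty ∧
    ∀ a ∈ Set.Ioo (1 : ℝ)
      (min (min ((5 * γ - 3) / (3 * γ))
          (1 + (-5 + Real.sqrt (5 * (180 * γ ^ 2 - 456 * γ + 281))) / (30 * γ)))
        ((γ + 1) / γ)),
      15 * (a * γ) ^ 2 + (a * γ) * (5 - 30 * γ) + 33 * γ - 23 < 0 := by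
  have hg : 0 < γ := by linarith
  have hD : 25 < 5 * (180 * γ ^ 2 - 456 * γ + 281) := by
    nlinarith [mul_pos (show 0 < 15 * γ - 23 by linarith) (show 0 < γ - 1 by linarith)]
  have hs : 5 < Real.sqrt (5 * (180 * γ ^ 2 - 456 * γ + 281)) := by
    apply Real.lt_sqrt_of_sq_lt
    linarith
  have hsq := Real.sq_sqrt (show 0 ≤ 5 * (180 * γ ^ 2 - 456 * γ + 281) by linarith)
  constructor
  · rw [Set.nonempty_Ioo, lt_min_iff, lt_min_iff]
    refine ⟨⟨?_, ?_⟩, ?_⟩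
    · rw [lt_div_iff₀ (by positivity)]
      linarith
    · have : 0 < (-5 + Real.sqrt (5 * (180 * γ ^ 2 - 456 * γ + 281))) / (30 * γ) :=
        div_pos (by linarith) (by positivity)
      linarith
    · rw [lt_div_iff₀ hg]
      linarith
  · rintro a ⟨h1, h2⟩
    rw [lt_min_iff, lt_min_iff] at h2
    obtain ⟨⟨-, h⟩, -⟩ := h2
    have h' : a - 1 < (-5 + Real.sqrt (5 * (180 * γ ^ 2 - 456 * γ + 281))) / (30 * γ) := by
      linarith
    rw [lt_div_iff₀ (by positivity)] at h'
    have hp : 0 < (a - 1) * (30 * γ) := mul_pos (by linarith) (by positivity)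
    have := pow_lt_pow_left₀ (show (a - 1) * (30 * γ) + 5 <
      Real.sqrt (5 * (180 * γ ^ 2 - 456 * γ + 281)) by linarith) (by linarith) two_ne_zero
    rw [hsq] at this
    nlinarith
end
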